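/- Let G be a computable amenable group and (F_i) a Følner sequence in G. For every rational ε > 0 there exist indices j_1, …, j_k, a number N, and a partial computable function R from finite subsets of G to k-tuples of finite subsets of G such that, for every i > N, R(F_i) is defined, and writing (R_1, …, R_k) := R(F_i): (1) ⋃_{s=1}^k F_{j_s} R_s ⊆ F_i; (2) |F_i \ ⋃_{s=1}^k F_{j_s} R_s| ≤ ε |F_i|; (3) ∑_{s=1}^k |F_{j_s}|·|R_s| ≤ (1+ε) |⋃_{s=1}^k F_{j_s} R_s|; (4) ∑_{s=1}^k |F_{j_s}|·|R_s| ≤ (1+ε) |F_i|. -/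

import Mathlib

open Filter MeasureTheory
open scoped Pointwise Classical

namespace Brudno

noncomputable section

/-- Complexity of a binary string `x` relative to a partial function `f` :
the minimal length of a `y` with `f y = x`. -/
def CF (f : List Bool →. List Bool) (x : List Bool) : ℕ :=
  sInf { n | ∃ y : List Bool, y.length = n ∧ x ∈ f y }

/-- `u` is an optimal partial computable machine: it is partial computable, and for
every partial computable `f` there is a constant `K` with `C_u x ≤ C_f x + K` for all `x`. -/
def Optimal (u : List Bool →. List Bool) : Prop :=
  Partrec u ∧ ∀ f : List Bool →. List Bool, Partrec f →
    ∃ K : ℕ, ∀ x y : List Bool, x ∈ f y → CF u x ≤ y.length + K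

/-- Kolmogorov complexity of a natural number (relative to the machine `u`),
via the binary representation. -/
def KC (u : List Bool →. List Bool) (n : ℕ) : ℕ := CF u (Nat.bits n)

/-- A fixed computable injective encoding of finite subsets of `ℕ` into `ℕ`
(hence into binary strings). -/
def encFinsetNat (F : Finset ℕ) : ℕ := Encodable.encode (F.sort (· ≤ ·))

variable {G A B : Type}

/-- Encoding of a finite subset of `G`, where `G` has underlying set `ℕ` via `e`. -/
def encFinset (e : G ≃ ℕ) (F : Finset G) : ℕ := encFinsetNat (F.image e)

/-- The group multiplication is computable on the underlying set `ℕ`. -/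
def ComputableMul [Group G] (e : G ≃ ℕ) : Prop :=
  Computable₂ fun m n : ℕ => e (e.symm m * e.symm n)

/-- A Følner sequence: a sequence of (nonempty) finite subsets with
`|gFᵢ \ Fᵢ| / |Fᵢ| → 0` for every `g ∈ G`. -/
def IsFolner [Group G] (F : ℕ → Finset G) : Prop :=
  (∀ i, (F i).Nonempty) ∧
    ∀ g : G,
      Tendsto (fun i => (((F i).image (fun h => g * h) \ F i).card : ℝ) / ((F i).card : ℝ))
        atTop (nhds 0)

/-- A tempered sequence: `|⋃_{j<i} Fⱼ⁻¹ Fᵢ| ≤ K |Fᵢ|` for all `i`. -/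
def Tempered [Group G] (F : ℕ → Finset G) : Prop :=
  ∃ K : ℝ, 0 < K ∧
    ∀ i : ℕ, ((((Finset.range i).biUnion fun j => (F j)⁻¹ * F i)).card : ℝ) ≤ K * ((F i).card : ℝ)

/-- A modest sequence: `C(Fᵢ)/|Fᵢ| → 0`. -/
def Modest (u : List Bool →. List Bool) (e : G ≃ ℕ) (F : ℕ → Finset G) : Prop :=
  Tendsto (fun i => (KC u (encFinset e (F i)) : ℝ) / ((F i).card : ℝ)) atTop (nhds 0)

/-- The shift action of `G` on `A^G`: `(g • x) h = x (h * g)`. -/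
def shift [Group G] (g : G) (x : G → A) : G → A := fun h => x (h * g)

/-- A fixed computable injective encoding of the restriction of `x : G → A` to a finite
subset `F ⊆ G` (a partial map with finite domain), listing the domain in increasing
order of the ℕ-codes. -/
def encRestrict [Encodable A] (e : G ≃ ℕ) (F : Finset G) (x : G → A) : ℕ :=
  Encodable.encode
    (((F.image e).sort (· ≤ ·)).map fun n => (n, Encodable.encode (x (e.symm n))))

/-- Upper asymptotic complexity of `x ∈ A^G` relative to the sequence `F`. -/
def uac [Encodable A] (u : List Bool →. List Bool) (e : G ≃ ℕ) (F : ℕ → Finset G)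
    (x : G → A) : ℝ :=
  limsup (fun i => (KC u (encRestrict e (F i) x) : ℝ) / ((F i).card : ℝ)) atTop

/-- Lower asymptotic complexity of `x ∈ A^G` relative to the sequence `F`. -/
def lac [Encodable A] (u : List Bool →. List Bool) (e : G ≃ ℕ) (F : ℕ → Finset G)
    (x : G → A) : ℝ :=
  liminf (fun i => (KC u (encRestrict e (F i) x) : ℝ) / ((F i).card : ℝ)) atTop

/-- The product topology on `A^G`, `A` being discrete. -/
def prodiscrete (G A : Type) : TopologicalSpace (G → A) :=
  @Pi.topologicalSpace G (fun _ => A) fun _ => ⊥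

/-- The Borel σ-algebra of the prodiscrete topology on `A^G`. -/
def prodisBorel (G A : Type) : MeasurableSpace (G → A) := @borel (G → A) (prodiscrete G A)

/-- A subshift: a closed shift-invariant subset of `A^G`. -/
def IsSubshift [Group G] (X : Set (G → A)) : Prop :=
  @IsClosed (G → A) (prodiscrete G A) X ∧ ∀ g : G, ∀ x ∈ X, shift g x ∈ X

/-- The number of distinct restrictions to `F` of elements of `X`, i.e. `|pr_F(X)|`. -/
def projCount (F : Finset G) (X : Set (G → A)) : ℕ :=
  Nat.card ↥((fun (x : G → A) (g : ↥F) => x ↑g) '' X)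

/-- Shannon entropy (base 2) of the join partition `α^F` (whose atoms are the
cylinders over the finite set `F`), for the measure `μ`. -/
def Hjoin [Fintype A] (μ : @Measure (G → A) (prodisBorel G A)) (F : Finset G) : ℝ :=
  -∑ w : ↥F → A,
      (μ {x : G → A | ∀ g : ↥F, x ↑g = w g}).toReal *
        Real.logb 2 (μ {x : G → A | ∀ g : ↥F, x ↑g = w g}).toReal

/-- Shannon entropy (base 2) of the canonical alphabet partition. -/
def Halpha [Group G] [Fintype A] (μ : @Measure (G → A) (prodisBorel G A)) : ℝ :=
  -∑ a : A, (μ {x : G → A | x 1 = a}).toReal * Real.logb 2 (μ {x : G → A | x 1 = a}).toReal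

/-- `cont` of the restriction of `x` to `F`: the word of values of `x` on `F`,
listed in increasing order of the ℕ-codes of the elements of `F`. -/
def contWord (e : G ≃ ℕ) (F : Finset G) (x : G → A) : List A :=
  ((F.image e).sort (· ≤ ·)).map fun n => x (e.symm n)

/-- A fixed computable injective encoding of words over `A`. -/
def encWord [Encodable A] (w : List A) : ℕ := Encodable.encode w

/-- Frequency of the letter `a` in the word `w`. -/
def freq (w : List A) (a : A) : ℝ :=
  ((w.filter fun b => decide (b = a)).length : ℝ) / (w.length : ℝ)

/-- Shannon entropy (base 2) of the letter-frequency vector of the word `w`. -/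
def wordEntropy [Fintype A] (w : List A) : ℝ :=
  -∑ a : A, freq w a * Real.logb 2 (freq w a)

/-- The binary entropy function `H(p, 1-p)`. -/
def Hbin (p : ℝ) : ℝ := -(p * Real.logb 2 p) - (1 - p) * Real.logb 2 (1 - p)

/-- Normalized Hamming distance between two words (of the same length). -/
def hammingDist (w w' : List A) : ℝ :=
  (((w.zip w').filter fun p => decide (p.1 ≠ p.2)).length : ℝ) / (w.length : ℝ)

end

/-!
Choose tiles `F j₁, …, F jₖ` from the Følner sequence, each almost invariant under the inverses of
the preceding ones. A very invariant set `D` is tiled greedily from the last tile down to the first: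
translates of the current tile are added to `D` as long as each of them is mostly disjoint from what
is already covered. Once this stops, a translate centred at any interior uncovered point meets the
new translates in a fixed proportion `δ` of its size, and double counting shows that the uncovered
part has shrunk by the factor `1 - δ`, up to a boundary error. A bounded number of tiles therefore
covers `D` up to the proportion `ε`.

Such a quasi-tiling can be found effectively without following the construction: as the
multiplication is computable and `ε` is rational, being a quasi-tiling is decidable on codes, so an
unbounded search finds one whenever one exists.
-/

open scoped Finset

section Tiling

variable {G : Type*} [Group G]

/-- The `K`-core of `D`: the positions `c ∈ D` whose translate `K c` is contained in `D`. -/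
noncomputable def core (K D : Finset G) : Finset G := {c ∈ D | ∀ k ∈ K, k * c ∈ D}

lemma mul_mem_of_mem_core {K D : Finset G} {c k : G} (hc : c ∈ core K D) (hk : k ∈ K) :
    k * c ∈ D :=
  (Finset.mem_filter.mp hc).2 k hk

lemma card_sdiff_core_le (K D : Finset G) : #(D \ core K D) ≤ #K * #((K * D) \ D) := by
  have hsub : D \ core K D ⊆ K⁻¹ * ((K * D) \ D) := by
    intro c hc
    obtain ⟨hcD, hc⟩ := Finset.mem_sdiff.mp hc
    obtain ⟨k, hk, hkc⟩ : ∃ k ∈ K, k * c ∉ D := by simpa [core, hcD] using hc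
    exact Finset.mem_mul.mpr ⟨k⁻¹, Finset.inv_mem_inv hk, k * c,
      Finset.mem_sdiff.mpr ⟨Finset.mul_mem_mul hk hcD, hkc⟩, inv_mul_cancel_left k c⟩
  calc #(D \ core K D) ≤ #(K⁻¹ * ((K * D) \ D)) := Finset.card_le_card hsub
    _ ≤ #K⁻¹ * #((K * D) \ D) := Finset.card_mul_le
    _ = #K * #((K * D) \ D) := by rw [Finset.card_inv]

/-- `C` is a `δ`-packing of right translates of `K` into `D` relative to the occupied set `U`:
all the translates `K c`, `c ∈ C`, lie in `D`, and together they cover at least the proportion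
`1 - δ` of their total size outside `U`. -/
structure IsPacking (δ : ℝ) (D U K C : Finset G) : Prop where
  subset : U ∪ K * C ⊆ D
  le_card : #U + (1 - δ) * (#K * #C) ≤ (#(U ∪ K * C) : ℝ)

lemma card_union_mul_insert_ge (U K C : Finset G) (c : G) :
    #(U ∪ K * C) + #{k ∈ K | k * c ∉ U ∪ K * C} ≤ #(U ∪ K * insert c C) := by
  have hnew : #{k ∈ K | k * c ∉ U ∪ K * C} =
      #({k ∈ K | k * c ∉ U ∪ K * C}.image (· * c)) :=
    (Finset.card_image_of_injective _ (mul_left_injective c)).symm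
  rw [hnew, ← Finset.card_union_of_disjoint]
  · refine Finset.card_le_card (Finset.union_subset ?_ ?_)
    · exact Finset.union_subset_union_right
        (Finset.mul_subset_mul_left (Finset.subset_insert c C))
    · refine Finset.image_subset_iff.mpr fun k hk ↦ Finset.mem_union_right _ ?_
      exact Finset.mul_mem_mul (Finset.mem_filter.mp hk).1 (Finset.mem_insert_self c C)
  · simp only [Finset.disjoint_right, Finset.forall_mem_image]
    exact fun k hk ↦ (Finset.mem_filter.mp hk).2

lemma IsPacking.insert_of_mem_core {δ : ℝ} {D U K C : Finset G} {c : G} (hC : IsPacking δ D U K C)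
    (hc : c ∈ core K D) (hcC : c ∉ C) (hfree : #{k ∈ K | k * c ∈ U ∪ K * C} ≤ δ * #K) :
    IsPacking δ D U K (insert c C) where
  subset := by
    obtain ⟨hUD, hCD⟩ := Finset.union_subset_iff.mp hC.subset
    refine Finset.union_subset hUD ?_
    rw [Finset.insert_eq, Finset.mul_union]
    refine Finset.union_subset ?_ hCD
    rw [Finset.mul_subset_iff]
    rintro k hk _ hx
    rw [Finset.mem_singleton.mp hx]
    exact mul_mem_of_mem_core hc hk
  le_card := by
    have hsplit : (#{k ∈ K | k * c ∈ U ∪ K * C} : ℝ) + #{k ∈ K | k * c ∉ U ∪ K * C} = #K := by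
      exact_mod_cast Finset.card_filter_add_card_filter_not (s := K) (· * c ∈ U ∪ K * C)
    have hgrow : (#(U ∪ K * C) : ℝ) + #{k ∈ K | k * c ∉ U ∪ K * C} ≤ #(U ∪ K * insert c C) := by
      exact_mod_cast card_union_mul_insert_ge U K C c
    rw [Finset.card_insert_of_notMem hcC]
    push_cast
    linarith [hC.le_card]

lemma exists_maximal_isPacking (δ : ℝ) {D U K : Finset G} (hK : K.Nonempty) (hU : U ⊆ D) :
    ∃ C, Maximal (IsPacking δ D U K) C := by
  obtain ⟨k, hk⟩ := hK
  have hfin : {C | IsPacking δ D U K C}.Finite := by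
    refine (Finset.finite_toSet (K⁻¹ * D).powerset).subset fun C hC ↦ ?_
    refine Finset.mem_coe.mpr (Finset.mem_powerset.mpr fun c hc ↦ ?_)
    have hkc : k * c ∈ D := hC.subset (Finset.mem_union_right _ (Finset.mul_mem_mul hk hc))
    exact Finset.mem_mul.mpr ⟨k⁻¹, Finset.inv_mem_inv hk, k * c, hkc, inv_mul_cancel_left k c⟩
  exact hfin.exists_maximal ⟨∅, by simpa using hU, by simp⟩

lemma le_card_filter_of_maximal_isPacking {δ : ℝ} {D U K C : Finset G} {c : G} (hδ : δ ≤ 1)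
    (hC : Maximal (IsPacking δ D U K) C) (hc : c ∈ core K D) :
    δ * #K ≤ #{k ∈ K | k * c ∈ U ∪ K * C} := by
  by_cases hcC : c ∈ C
  · have hall : {k ∈ K | k * c ∈ U ∪ K * C} = K := Finset.filter_true_of_mem fun k hk ↦
      Finset.mem_union_right _ (Finset.mul_mem_mul hk hcC)
    rw [hall]
    exact mul_le_of_le_one_left (Nat.cast_nonneg _) hδ
  · by_contra! hfree
    exact hcC (hC.2 (hC.prop.insert_of_mem_core hc hcC hfree.le) (Finset.subset_insert c C)
      (Finset.mem_insert_self c C))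

lemma mul_card_le_card_sdiff {δ : ℝ} {K U V I : Finset G} (hK : K.Nonempty)
    (hfree : ∀ c ∈ I, ∀ k ∈ K, k * c ∉ U)
    (hcov : ∀ c ∈ I, δ * #K ≤ #{k ∈ K | k * c ∈ V}) :
    δ * #I ≤ #(V \ U) := by
  have hfiber : ∀ k ∈ K, #{c ∈ I | k * c ∈ V} ≤ #(V \ U) := by
    refine fun k hk ↦ Finset.card_le_card_of_injOn (k * ·) (fun c hc ↦ ?_)
      (mul_right_injective k).injOn
    obtain ⟨hcI, hcV⟩ := Finset.mem_filter.mp hc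
    exact Finset.mem_sdiff.mpr ⟨hcV, hfree c hcI k hk⟩
  have hdouble : ∑ c ∈ I, #{k ∈ K | k * c ∈ V} = ∑ k ∈ K, #{c ∈ I | k * c ∈ V} :=
    Finset.sum_card_bipartiteAbove_eq_sum_card_bipartiteBelow fun c k ↦ k * c ∈ V
  have hlower := Finset.card_nsmul_le_sum I _ _ hcov
  have hupper := Finset.sum_le_card_nsmul K _ _ hfiber
  rw [nsmul_eq_mul, ← Nat.cast_sum, hdouble] at hlower
  rw [smul_eq_mul] at hupper
  have hcount : (#K : ℝ) * (δ * #I) ≤ #K * #(V \ U) := by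
    calc (#K : ℝ) * (δ * #I) = #I * (δ * #K) := by ring
      _ ≤ (∑ k ∈ K, #{c ∈ I | k * c ∈ V} : ℕ) := hlower
      _ ≤ #K * #(V \ U) := by exact_mod_cast hupper
  exact le_of_mul_le_mul_left hcount (Nat.cast_pos.mpr hK.card_pos)

lemma exists_isPacking_card_sdiff_le {δ : ℝ} {D U K : Finset G} (hδ₀ : 0 ≤ δ) (hδ₁ : δ ≤ 1)
    (hK : K.Nonempty) (hU : U ⊆ D) :
    ∃ C, IsPacking δ D U K C ∧
      #(D \ (U ∪ K * C)) ≤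
        #(D \ U) - δ * (#(D \ U) - #(D \ core K D) - #((K⁻¹ * U) \ U) : ℝ) := by
  obtain ⟨C, hC⟩ := exists_maximal_isPacking δ hK hU
  refine ⟨C, hC.prop, ?_⟩
  set V := U ∪ K * C
  set I := {c ∈ core K D | c ∉ U ∧ c ∉ K⁻¹ * U} with hI
  have hgain : δ * #I ≤ #(V \ U) := by
    refine mul_card_le_card_sdiff hK (fun c hc k hk hkU ↦ ?_) fun c hc ↦
      le_card_filter_of_maximal_isPacking hδ₁ hC (Finset.mem_filter.mp hc).1
    exact (Finset.mem_filter.mp hc).2.2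
      (Finset.mem_mul.mpr ⟨k⁻¹, Finset.inv_mem_inv hk, k * c, hkU, inv_mul_cancel_left k c⟩)
  have hI_large : (#(D \ U) : ℝ) ≤ #I + #(D \ core K D) + #((K⁻¹ * U) \ U) := by
    have hsub : D \ U ⊆ I ∪ (D \ core K D) ∪ ((K⁻¹ * U) \ U) := by
      intro c
      simp only [hI, Finset.mem_union, Finset.mem_sdiff, Finset.mem_filter]
      tauto
    exact_mod_cast (Finset.card_le_card hsub).trans <|
      (Finset.card_union_le _ _).trans (Nat.add_le_add_right (Finset.card_union_le _ _) _)
  have hsplit : (#(D \ V) : ℝ) + #(V \ U) = #(D \ U) := by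
    have hunion : (D \ V) ∪ (V \ U) = D \ U :=
      Finset.sdiff_union_sdiff_cancel hC.prop.subset Finset.subset_union_left
    rw [← hunion, Finset.card_union_of_disjoint]
    · push_cast; rfl
    · exact Finset.sdiff_disjoint.mono_right Finset.sdiff_subset
  have hscaled := mul_le_mul_of_nonneg_left hI_large hδ₀
  linarith

lemma card_mul_biUnion_sdiff_le {ι : Type*} (A : Finset G) (S : Finset ι) (K R : ι → Finset G) :
    #((A * S.biUnion fun s ↦ K s * R s) \ S.biUnion (fun s ↦ K s * R s)) ≤
      ∑ s ∈ S, #((A * K s) \ K s) * #(R s) := by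
  have hsub : (A * S.biUnion fun s ↦ K s * R s) \ S.biUnion (fun s ↦ K s * R s) ⊆
      S.biUnion fun s ↦ ((A * K s) \ K s) * R s := by
    intro x hx
    obtain ⟨hxA, hxU⟩ := Finset.mem_sdiff.mp hx
    obtain ⟨a, ha, _, hy, rfl⟩ := Finset.mem_mul.mp hxA
    obtain ⟨s, hs, hy⟩ := Finset.mem_biUnion.mp hy
    obtain ⟨k, hk, r, hr, rfl⟩ := Finset.mem_mul.mp hy
    refine Finset.mem_biUnion.mpr ⟨s, hs, ?_⟩
    rw [← mul_assoc] at hxU ⊢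
    refine Finset.mul_mem_mul (Finset.mem_sdiff.mpr ⟨Finset.mul_mem_mul ha hk, fun hak ↦ ?_⟩) hr
    exact hxU (Finset.mem_biUnion.mpr ⟨s, hs, Finset.mul_mem_mul hak hr⟩)
  calc _ ≤ #(S.biUnion fun s ↦ ((A * K s) \ K s) * R s) := Finset.card_le_card hsub
    _ ≤ ∑ s ∈ S, #(((A * K s) \ K s) * R s) := Finset.card_biUnion_le
    _ ≤ ∑ s ∈ S, #((A * K s) \ K s) * #(R s) := Finset.sum_le_sum fun s _ ↦ Finset.card_mul_le

lemma exists_biUnion_mul_card_sdiff_le {ι : Type*} [LinearOrder ι] {δ η : ℝ} {D : Finset G}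
    {K : ι → Finset G} (hδ₀ : 0 ≤ δ) (hδ₁ : δ ≤ 1) (hη : 0 ≤ η) (hK : ∀ s, (K s).Nonempty)
    (hinv : ∀ s t, s < t → #(((K s)⁻¹ * K t) \ K t) ≤ η * ((1 - δ) * #(K t)))
    (hcore : ∀ s, #(D \ core (K s) D) ≤ η * #D) (S : Finset ι) :
    ∃ R : ι → Finset G, S.biUnion (fun s ↦ K s * R s) ⊆ D ∧
      (1 - δ) * ∑ s ∈ S, (#(K s) * #(R s) : ℝ) ≤ #(S.biUnion fun s ↦ K s * R s) ∧
      #(D \ S.biUnion fun s ↦ K s * R s) ≤ ((1 - δ) ^ #S + 2 * η) * #D := by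
  -- Larger indices carry the more invariant tiles and are placed first, so a smaller tile sees an
  -- occupied set `U` whose boundary is small relative to it.
  induction S using Finset.induction_on_min with
  | empty => exact ⟨fun _ ↦ ∅, by simp, by simp, by simpa [add_mul] using by positivity⟩
  | insert a S ha ih =>
    obtain ⟨R, hsub, hmass, hcov⟩ := ih
    set U := S.biUnion fun s ↦ K s * R s
    have haS : a ∉ S := fun h ↦ (ha a h).false
    have hboundary : #(((K a)⁻¹ * U) \ U) ≤ η * #D := by
      calc (#(((K a)⁻¹ * U) \ U) : ℝ) ≤ ∑ s ∈ S, (#(((K a)⁻¹ * K s) \ K s) * #(R s) : ℝ) := by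
            exact_mod_cast card_mul_biUnion_sdiff_le (K a)⁻¹ S K R
        _ ≤ ∑ s ∈ S, η * ((1 - δ) * #(K s)) * #(R s) := by
            gcongr with s hs
            exact hinv a s (ha s hs)
        _ = η * ((1 - δ) * ∑ s ∈ S, (#(K s) * #(R s) : ℝ)) := by
            simp only [Finset.mul_sum, mul_assoc]
        _ ≤ η * #U := by gcongr
        _ ≤ η * #D := by gcongr
    obtain ⟨C, hC, hdecay⟩ := exists_isPacking_card_sdiff_le hδ₀ hδ₁ (hK a) hsub
    have hR : ∀ s ∈ S, Function.update R a C s = R s := fun s hs ↦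
      Function.update_of_ne (ha s hs).ne' C R
    have hunion : (insert a S).biUnion (fun s ↦ K s * Function.update R a C s) = U ∪ K a * C := by
      rw [Finset.biUnion_insert, Function.update_self, Finset.union_comm]
      exact congrArg (· ∪ _) (Finset.biUnion_congr rfl fun s hs ↦ by rw [hR s hs])
    refine ⟨Function.update R a C, ?_, ?_, ?_⟩
    · exact hunion ▸ hC.subset
    · rw [hunion, Finset.sum_insert haS, Function.update_self,
        Finset.sum_congr rfl fun s hs ↦ by rw [hR s hs]]
      linarith [hC.le_card]
    · rw [hunion, Finset.card_insert_of_notMem haS, pow_succ]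
      calc (#(D \ (U ∪ K a * C)) : ℝ)
          ≤ (1 - δ) * #(D \ U) + δ * (#(D \ core (K a) D) + #(((K a)⁻¹ * U) \ U)) := by
            linarith
        _ ≤ (1 - δ) * (((1 - δ) ^ #S + 2 * η) * #D) + δ * (η * #D + η * #D) := by
            have := sub_nonneg.mpr hδ₁
            gcongr
            exact hcore a
        _ = ((1 - δ) ^ #S * (1 - δ) + 2 * η) * #D := by ring

/-- The translates `K s * R s` form an `ε`-quasi-tiling of `D`: they lie in `D`, leave at most the
proportion `ε` of `D` uncovered, and overlap by at most the proportion `ε` of their union. -/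
structure IsQuasiTiling {ι : Type*} [Fintype ι] (ε : ℝ) (D : Finset G) (K R : ι → Finset G) :
    Prop where
  subset : (Finset.univ.biUnion fun s ↦ K s * R s) ⊆ D
  card_sdiff_le : #(D \ Finset.univ.biUnion fun s ↦ K s * R s) ≤ ε * #D
  sum_card_le :
    ∑ s, (#(K s) * #(R s) : ℝ) ≤ (1 + ε) * #(Finset.univ.biUnion fun s ↦ K s * R s)

lemma IsQuasiTiling.sum_card_le_mul_card {ι : Type*} [Fintype ι] {ε : ℝ} {D : Finset G}
    {K R : ι → Finset G} (hε : 0 ≤ 1 + ε) (h : IsQuasiTiling ε D K R) :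
    ∑ s, (#(K s) * #(R s) : ℝ) ≤ (1 + ε) * #D :=
  h.sum_card_le.trans <|
    mul_le_mul_of_nonneg_left (Nat.cast_le.mpr (Finset.card_le_card h.subset)) hε

lemma exists_isQuasiTiling {ι : Type*} [Fintype ι] [LinearOrder ι] {ε : ℝ} {D : Finset G}
    {K : ι → Finset G} (hε : 0 < ε) (hι : (1 / (1 + ε)) ^ Fintype.card ι ≤ ε / 2)
    (hK : ∀ s, (K s).Nonempty)
    (hinv : ∀ s t, s < t → #(((K s)⁻¹ * K t) \ K t) ≤ ε / (4 * (1 + ε)) * #(K t))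
    (hcore : ∀ s, #(D \ core (K s) D) ≤ ε / 4 * #D) :
    ∃ R, IsQuasiTiling ε D K R := by
  have hε₁ : 0 < 1 + ε := by positivity
  have hδ : 1 - ε / (1 + ε) = 1 / (1 + ε) := by field_simp; ring
  -- The overlap parameter `δ = ε / (1 + ε)` turns the packing bound `1 - δ` into `1 / (1 + ε)`.
  obtain ⟨R, hsub, hmass, hcov⟩ := exists_biUnion_mul_card_sdiff_le (δ := ε / (1 + ε))
    (η := ε / 4) (by positivity) ((div_le_one hε₁).mpr (by linarith)) (by positivity) hK
    (fun s t hst ↦ (hinv s t hst).trans_eq (by rw [hδ]; field_simp)) hcore Finset.univ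
  rw [hδ] at hmass hcov
  refine ⟨R, hsub, hcov.trans ?_, ?_⟩
  · rw [Finset.card_univ]
    gcongr
    linarith
  · rwa [one_div, inv_mul_le_iff₀ hε₁] at hmass

end Tiling

section Folner

variable {G : Type} [Group G] {F : ℕ → Finset G}

lemma IsFolner.eventually_card_mul_sdiff_le (hF : IsFolner F) (K : Finset G) {η : ℝ}
    (hη : 0 < η) : ∀ᶠ i in atTop, #((K * F i) \ F i) ≤ η * #(F i) := by
  have hsmall : ∀ᶠ i in atTop, ∀ g ∈ K,
      (#((F i).image (fun h ↦ g * h) \ F i) : ℝ) / #(F i) < η / (#K + 1) :=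
    (Filter.eventually_all_finset K).mpr fun g _ ↦
      (hF.2 g).eventually (gt_mem_nhds (by positivity))
  filter_upwards [hsmall] with i hi
  have hpos : (0 : ℝ) < #(F i) := Nat.cast_pos.mpr (hF.1 i).card_pos
  have hsub : (K * F i) \ F i ⊆ K.biUnion fun g ↦ (F i).image (fun h ↦ g * h) \ F i := by
    intro x hx
    obtain ⟨hx, hxF⟩ := Finset.mem_sdiff.mp hx
    obtain ⟨g, hg, y, hy, rfl⟩ := Finset.mem_mul.mp hx
    exact Finset.mem_biUnion.mpr
      ⟨g, hg, Finset.mem_sdiff.mpr ⟨Finset.mem_image_of_mem _ hy, hxF⟩⟩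
  calc (#((K * F i) \ F i) : ℝ) ≤ ∑ g ∈ K, (#((F i).image (fun h ↦ g * h) \ F i) : ℝ) := by
        exact_mod_cast (Finset.card_le_card hsub).trans Finset.card_biUnion_le
    _ ≤ ∑ g ∈ K, η / (#K + 1) * #(F i) :=
        Finset.sum_le_sum fun g hg ↦ ((div_lt_iff₀ hpos).mp (hi g hg)).le
    _ = #K / (#K + 1) * (η * #(F i)) := by
        rw [Finset.sum_const, nsmul_eq_mul]
        ring
    _ ≤ η * #(F i) :=
        mul_le_of_le_one_left (by positivity) ((div_le_one (by positivity)).mpr (by linarith))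

lemma IsFolner.eventually_card_sdiff_core_le (hF : IsFolner F) (K : Finset G) {η : ℝ}
    (hη : 0 < η) : ∀ᶠ i in atTop, #(F i \ core K (F i)) ≤ η * #(F i) := by
  filter_upwards [hF.eventually_card_mul_sdiff_le K (η := η / (#K + 1)) (by positivity)] with i hi
  calc (#(F i \ core K (F i)) : ℝ) ≤ #K * #((K * F i) \ F i) := by
        exact_mod_cast card_sdiff_core_le K (F i)
    _ ≤ (#K + 1) * (η / (#K + 1) * #(F i)) := by
        gcongr
        linarith
    _ = η * #(F i) := by field_simp

lemma IsFolner.exists_seq_card_inv_mul_sdiff_le (hF : IsFolner F) {η : ℝ} (hη : 0 < η) :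
    ∃ j : ℕ → ℕ, ∀ s t, s < t →
      #(((F (j s))⁻¹ * F (j t)) \ F (j t)) ≤ η * #(F (j t)) := by
  obtain ⟨j, -, hj⟩ := exists_seq_of_forall_finset_exists (fun _ ↦ True)
    (fun m n ↦ #(((F m)⁻¹ * F n) \ F n) ≤ η * #(F n)) fun s _ ↦ by
      simpa using ((Filter.eventually_all_finset s).mpr fun m _ ↦
        hF.eventually_card_mul_sdiff_le (F m)⁻¹ hη).exists
  exact ⟨j, hj⟩

theorem IsFolner.exists_eventually_isQuasiTiling (hF : IsFolner F) {ε : ℝ} (hε : 0 < ε) :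
    ∃ (k : ℕ) (j : Fin k → ℕ), ∀ᶠ i in atTop, ∃ R, IsQuasiTiling ε (F i) (fun s ↦ F (j s)) R := by
  obtain ⟨k, hk⟩ := exists_pow_lt_of_lt_one (half_pos hε)
    ((div_lt_one (by positivity)).mpr (by linarith) : 1 / (1 + ε) < 1)
  obtain ⟨j, hj⟩ :=
    hF.exists_seq_card_inv_mul_sdiff_le (η := ε / (4 * (1 + ε))) (by positivity)
  refine ⟨k, fun s ↦ j s, ?_⟩
  have hcore : ∀ᶠ i in atTop, ∀ s : Fin k, #(F i \ core (F (j s)) (F i)) ≤ ε / 4 * #(F i) :=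
    Filter.eventually_all.mpr fun s ↦ hF.eventually_card_sdiff_core_le (F (j s)) (by positivity)
  filter_upwards [hcore] with i hi
  exact exists_isQuasiTiling hε (by rw [Fintype.card_fin]; exact hk.le) (fun s ↦ hF.1 (j s))
    (fun s t hst ↦ hj s t hst) hi

end Folner

section Computability

lemma computable_list_map {α β : Type*} [Primcodable α] [Primcodable β] {f : α → β}
    (hf : Computable f) : Computable (List.map f) := by
  let step (l : List α) (p : ℕ × List β) : List β :=
    Option.casesOn l[p.1]? p.2 fun a ↦ p.2 ++ [f a]
  have hstep : Computable₂ step :=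
    Computable.option_casesOn (Computable.list_getElem?.comp .fst (Computable.fst.comp .snd))
      (Computable.snd.comp .snd)
      (Computable.list_concat.comp (Computable.snd.comp (Computable.snd.comp .fst)) (hf.comp .snd))
  have hprefix : ∀ (l : List α) (n : ℕ),
      Nat.rec (motive := fun _ ↦ List β) [] (fun n acc ↦ step l (n, acc)) n =
        (l.take n).map f := by
    intro l n
    induction n with
    | zero => simp
    | succ n ih =>
      simp only [step, ih, List.take_add_one, List.map_append]
      cases l[n]? <;> simp
  exact (Computable.nat_rec .list_length (.const []) hstep).of_eq fun l ↦
    (hprefix l l.length).trans (by rw [List.take_length])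

lemma primrec_list_sum : Primrec (List.sum : List ℕ → ℕ) :=
  Primrec.list_foldr .id (.const 0) <|
    (Primrec.nat_add.comp (Primrec.fst.comp .snd) (Primrec.snd.comp .snd)).to₂

lemma primrecRel_mem_list {α : Type*} [Primcodable α] :
    PrimrecRel fun (l : List α) (a : α) ↦ a ∈ l :=
  Primrec.eq.exists_mem_list.of_eq fun l a ↦ by simp

lemma primrec_sort_toFinset : Primrec fun l : List ℕ ↦ l.toFinset.sort (· ≤ ·) := by
  have hfilter : Primrec fun l : List ℕ ↦ (List.range (l.sum + 1)).filter (· ∈ l) :=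
    (PrimrecRel.listFilter primrecRel_mem_list.swap).comp
      (Primrec.list_range.comp (Primrec.succ.comp primrec_list_sum)) .id
  refine hfilter.of_eq fun l ↦ ?_
  have hset : l.toFinset = ((List.range (l.sum + 1)).filter (· ∈ l)).toFinset := by
    ext n
    simpa [Nat.lt_succ_iff] using fun h ↦ List.le_sum_of_mem h
  rw [hset, eq_comm, List.toFinset_sort _ (List.nodup_range.filter _)]
  exact List.pairwise_le_range.filter _

lemma primrec_card_toFinset : Primrec fun l : List ℕ ↦ #l.toFinset :=
  (Primrec.list_length.comp primrec_sort_toFinset).of_eq fun _ ↦ Finset.length_sort _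

lemma primrecRel_le_rat_mul {q : ℚ} (hq : 0 ≤ q) : PrimrecRel fun a b : ℕ ↦ (a : ℝ) ≤ q * b := by
  have hle : PrimrecRel fun a b : ℕ ↦ a * q.den ≤ q.num.toNat * b :=
    Primrec.nat_le.comp (Primrec.nat_mul.comp .fst (.const _))
      (Primrec.nat_mul.comp (.const _) .snd)
  refine hle.of_eq fun a b ↦ ?_
  have hnum : (q.num.toNat : ℝ) = q * q.den := by
    have hcast : ((q.num.toNat : ℤ) : ℚ) = q.num := by
      rw [Int.toNat_of_nonneg (Rat.num_nonneg.mpr hq)]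
    exact_mod_cast hcast.trans (Rat.mul_den_eq_num q).symm
  have hden : (0 : ℝ) < q.den := Nat.cast_pos.mpr q.den_pos
  rw [← Nat.cast_le (α := ℝ), Nat.cast_mul, Nat.cast_mul, hnum, mul_right_comm,
    mul_le_mul_iff_left₀ hden]

lemma exists_partrec_choice {α β : Type*} [Primcodable α] [Primcodable β] {r : α → β → Prop}
    (hr : ComputablePred fun p : α × β ↦ r p.1 p.2) :
    ∃ R : α →. β, Partrec R ∧ (∀ a, ∀ b ∈ R a, r a b) ∧ ∀ a, (∃ b, r a b) → (R a).Dom := by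
  let test (a : α) (b : β) : Option β := bif decide (r a b) then some b else none
  let search (a : α) (n : ℕ) : Option β := (Encodable.decode n).bind (test a)
  have htest : Computable₂ test :=
    (Computable.cond hr.decide (Computable.option_some.comp .snd) (.const none)).to₂
  have hsearch : Computable₂ search :=
    (Computable.option_bind (Computable.decode.comp .snd)
      (htest.comp (Computable.fst.comp .fst) .snd).to₂).to₂
  have hmem : ∀ a n b, b ∈ search a n ↔ Encodable.decode n = some b ∧ r a b := by
    simp only [search, test, Option.mem_def, Option.bind_eq_some_iff, Bool.cond_decide]
    grind
  refine ⟨fun a ↦ Nat.rfindOpt (search a), Partrec.rfindOpt hsearch, fun a b hb ↦ ?_,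
    fun a ⟨b, hb⟩ ↦ ?_⟩
  · obtain ⟨n, hn⟩ := Nat.rfindOpt_spec hb
    exact ((hmem a n b).mp hn).2
  · exact Nat.rfindOpt_dom.mpr
      ⟨Encodable.encode b, b, (hmem a _ b).mpr ⟨Encodable.encodek b, hb⟩⟩

end Computability

section Codes

variable {G : Type} (e : G ≃ ℕ)

/-- The finite subset of `G` whose elements have the numbers in `l` as their codes under `e`.
Unlike in `encFinset`, the list may be unsorted and contain repetitions. -/
def ofCodes (l : List ℕ) : Finset G := l.toFinset.map e.symm.toEmbedding

variable {e}

@[simp]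
lemma mem_ofCodes {l : List ℕ} {g : G} : g ∈ ofCodes e l ↔ e g ∈ l := by
  simp [ofCodes]

lemma card_ofCodes (l : List ℕ) : #(ofCodes e l) = #l.toFinset :=
  Finset.card_map _

lemma ofCodes_sort_image (K : Finset G) : ofCodes e ((K.image e).sort (· ≤ ·)) = K := by
  ext g
  simp

lemma encFinset_ofCodes (l : List ℕ) :
    encFinset e (ofCodes e l) = Encodable.encode (l.toFinset.sort (· ≤ ·)) := by
  have himage : (ofCodes e l).image e = l.toFinset := by
    ext n
    simp [e.exists_congr_left]
  rw [encFinset, encFinsetNat, himage]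

lemma ofCodes_subset_ofCodes {l m : List ℕ} : ofCodes e l ⊆ ofCodes e m ↔ ∀ n ∈ l, n ∈ m := by
  simp [Finset.subset_iff, e.forall_congr_left]

lemma ofCodes_filter_notMem (l m : List ℕ) :
    ofCodes e (l.filter (· ∉ m)) = ofCodes e l \ ofCodes e m := by
  ext g
  simp

lemma ofCodes_flatten_ofFn {k : ℕ} (L : Fin k → List ℕ) :
    ofCodes e (List.ofFn L).flatten = Finset.univ.biUnion fun s ↦ ofCodes e (L s) := by
  ext g
  simp

variable [Group G]

variable (e) in
/-- The codes of all products of an element with code in `l` and an element with code in `m`. -/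
def mulCodes (l m : List ℕ) : List ℕ := (l ×ˢ m).map fun p ↦ e (e.symm p.1 * e.symm p.2)

lemma ofCodes_mulCodes (l m : List ℕ) : ofCodes e (mulCodes e l m) = ofCodes e l * ofCodes e m := by
  ext g
  simp [mulCodes, Finset.mem_mul, e.exists_congr_left, and_assoc]

lemma computable_mulCodes (he : ComputableMul e) : Computable₂ (mulCodes e) := by
  have hprod : Primrec₂ fun l m : List ℕ ↦ l ×ˢ m :=
    Primrec.list_flatMap .fst <| Primrec.list_map (Primrec.snd.comp .fst)
      (Primrec.pair (Primrec.snd.comp .fst) .snd)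
  exact (computable_list_map he).comp hprod.to_comp

end Codes

section Search

variable {k : ℕ}

/-- The defining conditions of an `ε`-quasi-tiling, read off from lists `q.1`, `q.2.1 s` and `q.2.2`
of codes for the set to be tiled, for the position sets and for the union of the tiles, where the
`s`-th tile has `w s` elements. -/
def IsQuasiTilingCode (ε : ℝ) (w : Fin k → ℕ) (q : List ℕ × (Fin k → List ℕ) × List ℕ) : Prop :=
  (∀ n ∈ q.2.2, n ∈ q.1) ∧ #(q.1.filter (· ∉ q.2.2)).toFinset ≤ ε * #q.1.toFinset ∧
    (∑ s, w s * #(q.2.1 s).toFinset : ℕ) ≤ (1 + ε) * #q.2.2.toFinset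

lemma primrecPred_isQuasiTilingCode {ε : ℚ} (hε : 0 ≤ ε) (w : Fin k → ℕ) :
    PrimrecPred (IsQuasiTilingCode (ε : ℝ) w) := by
  have hsubset : PrimrecPred fun q : List ℕ × (Fin k → List ℕ) × List ℕ ↦ ∀ n ∈ q.2.2, n ∈ q.1 :=
    primrecRel_mem_list.swap.forall_mem_list.comp (Primrec.snd.comp .snd) .fst
  have hdiff : Primrec fun q : List ℕ × (Fin k → List ℕ) × List ℕ ↦ q.1.filter (· ∉ q.2.2) :=
    (PrimrecRel.listFilter primrecRel_mem_list.swap.not).comp .fst (Primrec.snd.comp .snd)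
  have hsum : Primrec fun q : List ℕ × (Fin k → List ℕ) × List ℕ ↦
      ∑ s, w s * #(q.2.1 s).toFinset := by
    have hterm : ∀ s, Primrec fun q : List ℕ × (Fin k → List ℕ) × List ℕ ↦
        w s * #(q.2.1 s).toFinset := fun s ↦
      Primrec.nat_mul.comp (.const _) <| primrec_card_toFinset.comp <|
        Primrec.fin_app.comp (Primrec.fst.comp .snd) (.const s)
    exact (primrec_list_sum.comp (Primrec.list_ofFn hterm)).of_eq fun _ ↦ List.sum_ofFn
  have hbound : 0 ≤ 1 + ε := by positivity
  refine (hsubset.and (((primrecRel_le_rat_mul hε).comp (primrec_card_toFinset.comp hdiff)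
    (primrec_card_toFinset.comp .fst)).and ((primrecRel_le_rat_mul hbound).comp hsum
      (primrec_card_toFinset.comp (Primrec.snd.comp .snd))))).of_eq fun q ↦ ?_
  simp only [IsQuasiTilingCode, Rat.cast_add, Rat.cast_one]

variable {G : Type} [Group G] {e : G ≃ ℕ}

lemma isQuasiTilingCode_iff {ε : ℝ} {D U : List ℕ} {K : Fin k → Finset G} {R : Fin k → List ℕ}
    (hU : ofCodes e U = Finset.univ.biUnion fun s ↦ K s * ofCodes e (R s)) :
    IsQuasiTilingCode ε (fun s ↦ #(K s)) (D, R, U) ↔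
      IsQuasiTiling ε (ofCodes e D) K (fun s ↦ ofCodes e (R s)) := by
  simp only [IsQuasiTilingCode, ← ofCodes_subset_ofCodes (e := e), ← card_ofCodes (e := e),
    ofCodes_filter_notMem, hU, Nat.cast_sum, Nat.cast_mul]
  exact ⟨fun ⟨hsub, hcov, hsum⟩ ↦ ⟨hsub, hcov, hsum⟩,
    fun h ↦ ⟨h.subset, h.card_sdiff_le, h.sum_card_le⟩⟩

lemma computablePred_isQuasiTiling (he : ComputableMul e) {ε : ℚ} (hε : 0 ≤ ε)
    (K : Fin k → Finset G) :
    ComputablePred fun p : List ℕ × (Fin k → List ℕ) ↦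
      IsQuasiTiling ε (ofCodes e p.1) K (fun s ↦ ofCodes e (p.2 s)) := by
  let unionCodes (R : Fin k → List ℕ) : List ℕ :=
    (List.ofFn fun s ↦ mulCodes e (((K s).image e).sort (· ≤ ·)) (R s)).flatten
  have hunion : Computable unionCodes :=
    Primrec.list_flatten.to_comp.comp <| Computable.list_ofFn fun s ↦
      (computable_mulCodes he).comp (.const _) (Computable.fin_app.comp .id (.const s))
  have hreduce : ∀ p : List ℕ × (Fin k → List ℕ),
      IsQuasiTiling ε (ofCodes e p.1) K (fun s ↦ ofCodes e (p.2 s)) ↔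
        IsQuasiTilingCode ε (fun s ↦ #(K s)) (p.1, p.2, unionCodes p.2) :=
    fun p ↦ (isQuasiTilingCode_iff <| by
      simp only [unionCodes, ofCodes_flatten_ofFn, ofCodes_mulCodes, ofCodes_sort_image]).symm
  exact ComputablePred.computable_of_manyOneReducible
    ⟨_, .pair .fst (.pair .snd (hunion.comp .snd)), hreduce⟩
    (primrecPred_isQuasiTilingCode hε _).computablePred

lemma exists_partrec_isQuasiTiling (he : ComputableMul e) {ε : ℚ} (hε : 0 ≤ ε)
    (K : Fin k → Finset G) :
    ∃ R : ℕ →. ℕ, Partrec R ∧ ∀ D : Finset G, (∃ Rs, IsQuasiTiling ε D K Rs) →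
      ∃ Rs, IsQuasiTiling ε D K Rs ∧
        Encodable.encode (List.ofFn fun s ↦ encFinset e (Rs s)) ∈ R (encFinset e D) := by
  obtain ⟨search, hsearch, hsound, hcomplete⟩ :=
    exists_partrec_choice (r := fun D (R : Fin k → List ℕ) ↦
      IsQuasiTiling ε (ofCodes e D) K (fun s ↦ ofCodes e (R s)))
      (computablePred_isQuasiTiling he hε K)
  let output (R : Fin k → List ℕ) : ℕ :=
    Encodable.encode (List.ofFn fun s ↦ Encodable.encode ((R s).toFinset.sort (· ≤ ·)))
  have houtput : Primrec output := Primrec.encode.comp <| Primrec.list_ofFn fun s ↦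
    Primrec.encode.comp <| primrec_sort_toFinset.comp <| Primrec.fin_app.comp .id (.const s)
  let run (n : ℕ) : Part ℕ :=
    (Part.ofOption (Encodable.decode n)).bind fun D ↦ (search D).map output
  have hrun : Partrec run := Partrec.bind (Computable.ofOption .decode)
    ((hsearch.map (houtput.to_comp.comp .snd).to₂).comp .snd).to₂
  refine ⟨run, hrun, fun D ⟨Rs, hRs⟩ ↦ ?_⟩
  have hhalt : (search ((D.image e).sort (· ≤ ·))).Dom :=
    hcomplete _ ⟨fun s ↦ ((Rs s).image e).sort (· ≤ ·), by simpa only [ofCodes_sort_image]⟩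
  obtain ⟨R, hR⟩ := Part.dom_iff_mem.mp hhalt
  refine ⟨fun s ↦ ofCodes e (R s), by simpa only [ofCodes_sort_image] using hsound _ R hR, ?_⟩
  simp only [encFinset_ofCodes]
  exact Part.mem_bind_iff.mpr
    ⟨_, Part.mem_ofOption.mpr (Encodable.encodek _), Part.mem_map output hR⟩

end Search

/-- **computable Ornstein–Weiss covering lemma.** For a Følner sequence
`(F_i)` in a computable amenable group and every rational `ε > 0`, there are indices
`j_1, …, j_k`, a number `N`, and a partial computable function `R` (acting on encodings:
it receives the code of a finite subset and returns the code of a `k`-tuple of finite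
subsets) such that for every `i > N`, `R` is defined on (the code of) `F_i` and returns
(the code of) a tuple `(R_1, …, R_k)` of finite subsets of `G` with:
`⋃_s F_{j_s} R_s ⊆ F_i`; `|F_i \ ⋃_s F_{j_s} R_s| ≤ ε |F_i|`;
`∑_s |F_{j_s}|·|R_s| ≤ (1+ε)|⋃_s F_{j_s} R_s|`; and `∑_s |F_{j_s}|·|R_s| ≤ (1+ε)|F_i|`. -/
theorem statement18 {G : Type} [Group G]
    (e : G ≃ ℕ) (hGcomp : ComputableMul e)
    (F : ℕ → Finset G) (hF : IsFolner F)
    (ε : ℚ) (hε : 0 < ε) :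
    ∃ (k : ℕ) (j : Fin k → ℕ) (N : ℕ) (R : ℕ →. ℕ), Partrec R ∧
      ∀ i : ℕ, N < i → ∃ Rs : Fin k → Finset G,
        (Encodable.encode (List.ofFn fun s : Fin k => encFinset e (Rs s)))
            ∈ R (encFinset e (F i)) ∧
        (Finset.univ.biUnion fun s : Fin k => F (j s) * Rs s) ⊆ F i ∧
        (((F i \ Finset.univ.biUnion fun s : Fin k => F (j s) * Rs s)).card : ℝ) ≤
          (ε : ℝ) * ((F i).card : ℝ) ∧
        (∑ s : Fin k, ((F (j s)).card : ℝ) * ((Rs s).card : ℝ)) ≤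
          (1 + (ε : ℝ)) * (((Finset.univ.biUnion fun s : Fin k => F (j s) * Rs s)).card : ℝ) ∧
        (∑ s : Fin k, ((F (j s)).card : ℝ) * ((Rs s).card : ℝ)) ≤
          (1 + (ε : ℝ)) * ((F i).card : ℝ) := by
  have hε' : (0 : ℝ) < ε := Rat.cast_pos.mpr hε
  obtain ⟨k, j, htiling⟩ := hF.exists_eventually_isQuasiTiling hε'
  obtain ⟨N, hN⟩ := Filter.eventually_atTop.mp htiling
  obtain ⟨R, hR, hsearch⟩ := exists_partrec_isQuasiTiling hGcomp hε.le fun s ↦ F (j s)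
  refine ⟨k, j, N, R, hR, fun i hi ↦ ?_⟩
  obtain ⟨Rs, htile, hmem⟩ := hsearch (F i) (hN i hi.le)
  exact ⟨Rs, hmem, htile.subset, htile.card_sdiff_le, htile.sum_card_le,
    htile.sum_card_le_mul_card (by positivity)⟩

end Brudno
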